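/- Let R¹, R², S¹, S² be finite nonempty posets such that R¹ and R² have disjoint carriers and S¹ and S² have disjoint carriers. If R¹ ⊑_G S¹ and R² ⊑_G S², then R¹ ⊕ R² ⊑_G S¹ ⊕ S². -/

import Mathlib

/-!
A monotone map `P → A ⊕ₗ B` is the same thing as a lower set `D` of `P` (the preimage of `A`)
together with monotone maps `D → A` and `Dᶜ → B`; this is `glue_bijective`. Given schemes for
`R₁, S₁` and `R₂, S₂`, one keeps `D`, applies the first scheme to `D` and the second to `Dᶜ`, and
glues again. Injectivity is then inherited from the two schemes. As each fibre of a glued map lies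
in `D` or in `Dᶜ`, its connected components are those computed in the corresponding subposet
(`Gmap_eq_image`), so the two schemes preserve them.

Since `D` or `Dᶜ` may be empty, the schemes are first extended to the empty poset
(`SqsubG.exists_scheme`).
-/

/-- One zigzag step inside the subset `A`. -/
def ZigStep {P : Type} [PartialOrder P] (A : Set P) (a b : P) : Prop :=
  a ∈ A ∧ b ∈ A ∧ (a < b ∨ b < a)

/-- `gamma A x` is the set of points of `A` connected with `x` by a zigzag line inside `A`. -/
def gamma {P : Type} [PartialOrder P] (A : Set P) (x : P) : Set P :=
  {y | x ∈ A ∧ y ∈ A ∧ Relation.ReflTransGen (ZigStep A) x y}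

/-- `Gmap ξ x = γ_{ξ⁻¹(ξ(x))}(x)`. -/
def Gmap {P R : Type} [PartialOrder P] (ξ : P → R) (x : P) : Set P :=
  gamma (ξ ⁻¹' {ξ x}) x

/-- `R ⊑ S` : `#H(P,R) ≤ #H(P,S)` for every finite nonempty poset `P`. -/
def Sqsub (R S : Type) [PartialOrder R] [PartialOrder S] : Prop :=
  ∀ (P : Type) [PartialOrder P] [Finite P] [Nonempty P],
    Nat.card (P →o R) ≤ Nat.card (P →o S)

/-- `R ⊑_G S` : there is a strong G-scheme from `R` to `S`. -/
def SqsubG (R S : Type) [PartialOrder R] [PartialOrder S] : Prop :=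
  ∃ ρ : ∀ (P : Type) [PartialOrder P] [Finite P] [Nonempty P], (P →o R) → (P →o S),
    ∀ (P : Type) [PartialOrder P] [Finite P] [Nonempty P],
      Function.Injective (ρ P) ∧
      ∀ (ξ : P →o R) (x : P), Gmap (⇑(ρ P ξ)) x = Gmap (⇑ξ) x

/-- A strong G-scheme extends to the empty poset, on which there is exactly one map. -/
lemma SqsubG.exists_scheme {R S : Type} [PartialOrder R] [PartialOrder S] (h : SqsubG R S) :
    ∃ ρ : ∀ (P : Type) [PartialOrder P] [Finite P], (P →o R) → (P →o S),
      ∀ (P : Type) [PartialOrder P] [Finite P],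
        Function.Injective (ρ P) ∧
        ∀ (ξ : P →o R) (x : P), Gmap (⇑(ρ P ξ)) x = Gmap (⇑ξ) x := by
  classical
  obtain ⟨ρ, hρ⟩ := h
  refine ⟨fun P _ _ => if hP : Nonempty P then ρ P else
    fun _ => ⟨fun x => (hP ⟨x⟩).elim, fun x => (hP ⟨x⟩).elim⟩, fun P _ _ => ?_⟩
  by_cases hP : Nonempty P
  · simpa only [hP, dif_pos] using hρ P
  · exact ⟨fun f g _ => OrderHom.ext _ _ (funext fun x => (hP ⟨x⟩).elim),
      fun ξ x => (hP ⟨x⟩).elim⟩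

lemma gamma_image {P : Type} [PartialOrder P] {s : Set P} (B : Set s) (x : s) :
    gamma (Subtype.val '' B) (x : P) = Subtype.val '' gamma B x := by
  ext y
  constructor
  · rintro ⟨hx, hy, hxy⟩
    have key : ∀ z : P, Relation.ReflTransGen (ZigStep (Subtype.val '' B)) (x : P) z →
        ∃ w : s, (w : P) = z ∧ Relation.ReflTransGen (ZigStep B) x w := by
      intro z hz
      induction hz with
      | refl => exact ⟨x, rfl, .refl⟩
      | tail _ hstep ih =>
        obtain ⟨w, rfl, hw⟩ := ih
        obtain ⟨ha, ⟨b, hb, rfl⟩, hlt⟩ := hstep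
        exact ⟨b, rfl, hw.tail ⟨(Subtype.val_injective.mem_set_image).1 ha, hb, hlt⟩⟩
    obtain ⟨w, rfl, hw⟩ := key y hxy
    exact ⟨w, ⟨(Subtype.val_injective.mem_set_image).1 hx,
      (Subtype.val_injective.mem_set_image).1 hy, hw⟩, rfl⟩
  · rintro ⟨w, ⟨hx, hw, hxw⟩, rfl⟩
    exact ⟨⟨x, hx, rfl⟩, ⟨w, hw, rfl⟩, hxw.lift _ fun a b ⟨ha, hb, hlt⟩ =>
      ⟨⟨a, ha, rfl⟩, ⟨b, hb, rfl⟩, hlt⟩⟩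

/-- If the fibre of `F` through a point of `s` is the fibre of a map `f` defined on `s` only, then
the components of the fibre may be computed in `s`. -/
lemma Gmap_eq_image {P T R : Type} [PartialOrder P] {s : Set P} (F : P → T) (f : s → R) (x : s)
    (h : ∀ y : P, F y = F x ↔ ∃ hy : y ∈ s, f ⟨y, hy⟩ = f x) :
    Gmap F (x : P) = Subtype.val '' Gmap f x := by
  have hfib : F ⁻¹' {F x} = Subtype.val '' (f ⁻¹' {f x}) := by
    ext y
    simp [h y]
  rw [Gmap, hfib, gamma_image, Gmap]

/-- A lower set `D` of `P` with monotone maps `D → A` and `Dᶜ → B`. -/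
abbrev GlueData (P A B : Type) [PartialOrder P] [PartialOrder A] [PartialOrder B] : Type :=
  Σ D : LowerSet P, ((D : Set P) →o A) × (((D : Set P)ᶜ : Set P) →o B)

open Classical in
/-- The map into the ordinal sum given by `D → A` and `Dᶜ → B`; it is monotone because `D` is a
lower set. -/
noncomputable def glue {P A B : Type} [PartialOrder P] [PartialOrder A] [PartialOrder B]
    (d : GlueData P A B) : P →o A ⊕ₗ B where
  toFun x := if h : x ∈ (d.1 : Set P) then Sum.inlₗ (d.2.1 ⟨x, h⟩) else Sum.inrₗ (d.2.2 ⟨x, h⟩)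
  monotone' x y hxy := by
    by_cases hy : y ∈ (d.1 : Set P)
    · have hx : x ∈ (d.1 : Set P) := d.1.lower hxy hy
      simp only [hx, hy, dif_pos]
      exact Sum.Lex.inl_le_inl_iff.2 (d.2.1.monotone hxy)
    · by_cases hx : x ∈ (d.1 : Set P)
      · simp only [hx, hy, dif_pos, dif_neg, not_false_eq_true]
        exact Sum.Lex.inl_le_inr _ _
      · simp only [hx, hy, dif_neg, not_false_eq_true]
        exact Sum.Lex.inr_le_inr_iff.2 (d.2.2.monotone hxy)

section

variable {P A B : Type} [PartialOrder P] [PartialOrder A] [PartialOrder B]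

lemma glue_of_mem (d : GlueData P A B) {x : P} (h : x ∈ (d.1 : Set P)) :
    glue d x = toLex (Sum.inl (d.2.1 ⟨x, h⟩)) :=
  dif_pos h

lemma glue_of_notMem (d : GlueData P A B) {x : P} (h : x ∈ ((d.1 : Set P)ᶜ : Set P)) :
    glue d x = toLex (Sum.inr (d.2.2 ⟨x, h⟩)) :=
  dif_neg h

lemma Gmap_glue_of_mem (d : GlueData P A B) (x : (d.1 : Set P)) :
    Gmap (glue d) (x : P) = Subtype.val '' Gmap d.2.1 x := by
  refine Gmap_eq_image _ _ _ fun y => ?_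
  rw [glue_of_mem d x.2]
  by_cases hy : y ∈ (d.1 : Set P)
  · rw [glue_of_mem d hy]
    exact ⟨fun h => ⟨hy, by simpa using h⟩, fun ⟨_, h⟩ => by simpa using h⟩
  · rw [glue_of_notMem d hy]
    exact ⟨fun h => by simp at h, fun ⟨h, _⟩ => absurd h hy⟩

lemma Gmap_glue_of_notMem (d : GlueData P A B) (x : ((d.1 : Set P)ᶜ : Set P)) :
    Gmap (glue d) (x : P) = Subtype.val '' Gmap d.2.2 x := by
  refine Gmap_eq_image _ _ _ fun y => ?_
  rw [glue_of_notMem d x.2]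
  by_cases hy : y ∈ (d.1 : Set P)
  · rw [glue_of_mem d hy]
    exact ⟨fun h => by simp at h, fun ⟨h, _⟩ => absurd hy h⟩
  · rw [glue_of_notMem d hy]
    exact ⟨fun h => ⟨hy, by simpa using h⟩, fun ⟨_, h⟩ => by simpa using h⟩

lemma mem_iff_glue (d : GlueData P A B) (x : P) :
    x ∈ (d.1 : Set P) ↔ ∃ a, glue d x = toLex (Sum.inl a) := by
  by_cases hx : x ∈ (d.1 : Set P)
  · simp only [hx, true_iff]
    exact ⟨_, glue_of_mem d hx⟩
  · rw [glue_of_notMem d hx]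
    simpa using hx

lemma glue_injective : Function.Injective (glue : GlueData P A B → (P →o A ⊕ₗ B)) := by
  intro d d' h
  have hD : d.1 = d'.1 := by
    ext x
    rw [mem_iff_glue d, mem_iff_glue d', h]
  obtain ⟨D, f, g⟩ := d
  obtain ⟨D', f', g'⟩ := d'
  obtain rfl : D = D' := hD
  have hf : f = f' := by
    ext ⟨x, hx⟩
    have := DFunLike.congr_fun h x
    rw [glue_of_mem _ hx, glue_of_mem _ hx] at this
    exact Sum.inl_injective (toLex.injective this)
  have hg : g = g' := by
    ext ⟨x, hx⟩
    have := DFunLike.congr_fun h x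
    rw [glue_of_notMem _ hx, glue_of_notMem _ hx] at this
    exact Sum.inr_injective (toLex.injective this)
  rw [hf, hg]

lemma glue_surjective : Function.Surjective (glue : GlueData P A B → (P →o A ⊕ₗ B)) := by
  intro ξ
  let D : LowerSet P :=
    { carrier := {x | ∃ a, ξ x = toLex (Sum.inl a)}
      lower' := by
        rintro x y hyx ⟨a, ha⟩
        have hle := ξ.monotone hyx
        rw [ha] at hle
        match hy : ξ y with
        | Sum.inlₗ c => exact ⟨c, hy⟩
        | Sum.inrₗ c =>
          rw [hy] at hle
          exact absurd hle Sum.Lex.not_inr_le_inl }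
  have hl : ∀ x : (D : Set P), ∃ a, ξ x = toLex (Sum.inl a) := fun x => x.2
  have hr : ∀ x : ((D : Set P)ᶜ : Set P), ∃ b, ξ x = toLex (Sum.inr b) := by
    intro x
    match hx : ξ x with
    | Sum.inlₗ c => exact absurd ⟨c, hx⟩ x.2
    | Sum.inrₗ c => exact ⟨c, rfl⟩
  choose f hf using hl
  choose g hg using hr
  have hfm : Monotone f := by
    intro x y hxy
    have hle := ξ.monotone (show (x : P) ≤ y from hxy)
    rw [hf, hf] at hle
    exact Sum.Lex.inl_le_inl_iff.1 hle
  have hgm : Monotone g := by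
    intro x y hxy
    have hle := ξ.monotone (show (x : P) ≤ y from hxy)
    rw [hg, hg] at hle
    exact Sum.Lex.inr_le_inr_iff.1 hle
  refine ⟨⟨D, ⟨f, hfm⟩, ⟨g, hgm⟩⟩, OrderHom.ext _ _ (funext fun x => ?_)⟩
  by_cases hx : x ∈ (D : Set P)
  · rw [glue_of_mem _ hx]
    exact (hf ⟨x, hx⟩).symm
  · rw [glue_of_notMem _ hx]
    exact (hg ⟨x, hx⟩).symm

lemma glue_bijective : Function.Bijective (glue : GlueData P A B → (P →o A ⊕ₗ B)) :=
  ⟨glue_injective, glue_surjective⟩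

end

/-- Compatibility of `⊑_G` with ordinal sums: the ordinal sum `A ⊕ B` of two posets with
disjoint carriers is modelled by the lexicographic sum type `A ⊕ₗ B`. -/
theorem stmt6 (R₁ R₂ S₁ S₂ : Type)
    [PartialOrder R₁] [Finite R₁] [Nonempty R₁] [PartialOrder R₂] [Finite R₂] [Nonempty R₂]
    [PartialOrder S₁] [Finite S₁] [Nonempty S₁] [PartialOrder S₂] [Finite S₂] [Nonempty S₂]
    (h₁ : SqsubG R₁ S₁) (h₂ : SqsubG R₂ S₂) :
    SqsubG (R₁ ⊕ₗ R₂) (S₁ ⊕ₗ S₂) := by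
  obtain ⟨ρ₁, hρ₁⟩ := h₁.exists_scheme
  obtain ⟨ρ₂, hρ₂⟩ := h₂.exists_scheme
  let e (P : Type) [PartialOrder P] : GlueData P R₁ R₂ ≃ (P →o R₁ ⊕ₗ R₂) :=
    Equiv.ofBijective glue glue_bijective
  let τ (P : Type) [PartialOrder P] [Finite P] (d : GlueData P R₁ R₂) : GlueData P S₁ S₂ :=
    ⟨d.1, ρ₁ _ d.2.1, ρ₂ _ d.2.2⟩
  refine ⟨fun P _ _ _ ξ => glue (τ P ((e P).symm ξ)), fun P _ _ _ => ⟨?_, fun ξ x => ?_⟩⟩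
  · suffices hτ : Function.Injective (τ P) from
      glue_injective.comp (hτ.comp (e P).symm.injective)
    rintro ⟨D, f, g⟩ ⟨D', f', g'⟩ h
    obtain rfl : D = D' := congrArg Sigma.fst h
    have h' : (ρ₁ _ f, ρ₂ _ g) = (ρ₁ _ f', ρ₂ _ g') := eq_of_heq (Sigma.mk.inj h).2
    rw [(hρ₁ _).1 (Prod.mk.inj h').1, (hρ₂ _).1 (Prod.mk.inj h').2]
  · obtain ⟨d, rfl⟩ := (e P).surjective ξ
    simp only [Equiv.symm_apply_apply]
    change Gmap (glue (τ P d)) x = Gmap (glue d) x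
    by_cases hx : x ∈ (d.1 : Set P)
    · exact (Gmap_glue_of_mem (τ P d) ⟨x, hx⟩).trans
        ((congrArg _ ((hρ₁ _).2 d.2.1 ⟨x, hx⟩)).trans (Gmap_glue_of_mem d ⟨x, hx⟩).symm)
    · exact (Gmap_glue_of_notMem (τ P d) ⟨x, hx⟩).trans
        ((congrArg _ ((hρ₂ _).2 d.2.2 ⟨x, hx⟩)).trans (Gmap_glue_of_notMem d ⟨x, hx⟩).symm)
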